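/- If G is a non-abelian finite group of odd order, then tp(G) ≤ 4/81. -/

import Mathlib

/-!
Let `K` and `H` be subgroups of the same order. A double coset `KxH` consisting of `m` left cosets
of `H` also consists of `m` right cosets of `K`, and each of the former meets each of the latter in
`|H| / m` elements. Choosing one element from each of these left cosets at random therefore hits
distinct right cosets with probability `m! / mᵐ`, and `P_G(H, K)` is the product of these
probabilities over the double cosets. The factors decrease in `m`.

If `|G|` is odd and `H` is not normal, then for some `g` the number `m` of left cosets in `HgH` is
greater than `1`, and being odd it is at least `3`. The double coset `Hg⁻¹H` has the same `m`, and
it is different from `HgH`: otherwise `g = hg⁻¹h'` with `h, h' ∈ H`, so `(gh⁻¹)² ∈ H`, and a square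
root of an element of `H` lies in `H` because `|G|` is odd. Hence `P_G(H) ≤ (3! / 3³)² = 4 / 81`.

A non-normal `H` exists because a Dedekind group of odd order is abelian. By Sylow this is a matter
of `p`-groups with `p` odd. There the order of `b` modulo `⟨a⟩` and that of `a` modulo `⟨b⟩` are
comparable, and if the former divides the latter, then some `b' ∈ b⟨a⟩` has `⟨a⟩ ∩ ⟨b'⟩ = 1`. Two
normal subgroups with trivial intersection commute, so `b'`, and with it `b`, commutes with `a`.
-/

open scoped Pointwise Classical

/-- `T` is simultaneously a left transversal for `H` (each left coset `gH` contains exactly one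
element of `T`) and a right transversal for `K` (each right coset `Kg` contains exactly one
element of `T`). -/
def IsDoubleTransversal {G : Type*} [Group G] (H K : Subgroup G) (T : Set G) : Prop :=
  (∀ g : G, ∃! t : G, t ∈ T ∧ g⁻¹ * t ∈ H) ∧ (∀ g : G, ∃! t : G, t ∈ T ∧ t * g⁻¹ ∈ K)

/-- `|DT_G(H,K)|`: the number of common transversals for the pair `(H, K)`. -/
noncomputable def numDT {G : Type*} [Group G] (H K : Subgroup G) : ℕ :=
  Nat.card {T : Set G // IsDoubleTransversal H K T}

/-- `P_G(H,K) = |DT_G(H,K)| / |H| ^ (G:H)`, the common transversal probability. -/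
noncomputable def transProb {G : Type*} [Group G] (H K : Subgroup G) : ℚ :=
  (numDT H K : ℚ) / (Nat.card H : ℚ) ^ H.index

/-- `tp(G)`: the minimum of `P_G(H) = P_G(H,H)` over all subgroups `H ≤ G`. -/
noncomputable def tp (G : Type*) [Group G] [Finite G] : ℚ :=
  haveI : Finite (Subgroup G) :=
    Finite.of_injective (fun H : Subgroup G => (H : Set G)) SetLike.coe_injective
  haveI : Fintype (Subgroup G) := Fintype.ofFinite _
  Finset.univ.inf' Finset.univ_nonempty (fun H : Subgroup G => transProb H H)

section Commutator

open scoped commutatorElement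

variable {G : Type*} [Group G] {x y : G}

theorem commutatorElement_pow_left (h : Commute ⁅y, x⁆ y) (n : ℕ) : ⁅y ^ n, x⁆ = ⁅y, x⁆ ^ n := by
  have hconj : x * y * x⁻¹ = ⁅y, x⁆⁻¹ * y := by rw [commutatorElement_def]; group
  calc ⁅y ^ n, x⁆ = y ^ n * (x * y * x⁻¹)⁻¹ ^ n := by
        rw [inv_pow, conj_pow, commutatorElement_def]; group
    _ = y ^ n * (y⁻¹ ^ n * ⁅y, x⁆ ^ n) := by
        rw [hconj, mul_inv_rev, inv_inv, h.symm.inv_left.mul_pow]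
    _ = ⁅y, x⁆ ^ n := by rw [inv_pow, mul_inv_cancel_left]

theorem mul_pow_of_commute_commutatorElement (hx : Commute ⁅y, x⁆ x) (hy : Commute ⁅y, x⁆ y)
    (n : ℕ) : (x * y) ^ n = ⁅y, x⁆ ^ n.choose 2 * (x ^ n * y ^ n) := by
  have hswap (n : ℕ) : y ^ n * x = ⁅y, x⁆ ^ n * (x * y ^ n) := by
    rw [← commutatorElement_pow_left hy, commutatorElement_def]; group
  induction n with
  | zero => simp
  | succ n ih =>
    calc (x * y) ^ (n + 1) = ⁅y, x⁆ ^ n.choose 2 * (x ^ n * (y ^ n * x) * y) := by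
          rw [pow_succ, ih]; simp only [mul_assoc]
      _ = ⁅y, x⁆ ^ n.choose 2 * (x ^ n * ⁅y, x⁆ ^ n * (x * y ^ n) * y) := by
          rw [hswap]; simp only [mul_assoc]
      _ = ⁅y, x⁆ ^ n.choose 2 * ⁅y, x⁆ ^ n * (x ^ n * x * (y ^ n * y)) := by
          rw [← (hx.pow_pow n n).eq]; simp only [mul_assoc]
      _ = ⁅y, x⁆ ^ (n + 1).choose 2 * (x ^ (n + 1) * y ^ (n + 1)) := by
          rw [← pow_add, ← pow_succ, ← pow_succ, Nat.choose_succ_succ' n 1, Nat.choose_one_right,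
            add_comm (n.choose _)]

theorem dvd_choose_two_of_odd {n : ℕ} (hn : Odd n) : n ∣ n.choose 2 := by
  obtain ⟨k, rfl⟩ := hn
  rw [Nat.choose_two_right, Nat.add_sub_cancel, mul_left_comm, Nat.mul_div_cancel_left _ two_pos]
  exact Dvd.intro _ rfl

theorem mul_pow_of_odd_of_commute_pow (hx : Commute ⁅y, x⁆ x) (hy : Commute ⁅y, x⁆ y) {n : ℕ}
    (hn : Odd n) (hyx : Commute (y ^ n) x) : (x * y) ^ n = x ^ n * y ^ n := by
  have hone : ⁅y, x⁆ ^ n = 1 := by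
    rw [← commutatorElement_pow_left hy, commutatorElement_eq_one_iff_commute.2 hyx]
  obtain ⟨k, hk⟩ := dvd_choose_two_of_odd hn
  rw [mul_pow_of_commute_commutatorElement hx hy, hk, pow_mul, hone, one_pow, one_mul]

theorem commute_of_mem_zpowers (h : x ∈ Subgroup.zpowers y) : Commute x y := by
  obtain ⟨k, rfl⟩ := Subgroup.mem_zpowers_iff.1 h
  exact Commute.zpow_self y k

theorem disjoint_zpowers_of_pow_orderOf_eq_one {N : Subgroup G} [N.Normal] {g : G}
    (hg : g ^ orderOf (g : G ⧸ N) = 1) : Disjoint N (Subgroup.zpowers g) := by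
  rw [Subgroup.disjoint_def]
  intro z hzN hz
  obtain ⟨j, rfl⟩ := Subgroup.mem_zpowers_iff.1 hz
  rw [← QuotientGroup.eq_one_iff, QuotientGroup.mk_zpow, ← orderOf_dvd_iff_zpow_eq_one] at hzN
  obtain ⟨i, rfl⟩ := hzN
  rw [zpow_mul, zpow_natCast, hg, one_zpow]

end Commutator

/-- A Dedekind group: every subgroup is normal. It is a class so that the quotients by cyclic
subgroups are recognised as groups. -/
class IsDedekindGroup (G : Type*) [Group G] : Prop where
  normal (H : Subgroup G) : H.Normal

namespace IsDedekindGroup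

open scoped commutatorElement

attribute [instance] normal

variable {G : Type*} [Group G] [IsDedekindGroup G]

instance (H : Subgroup G) : IsDedekindGroup H where
  normal K := by
    rw [← Subgroup.comap_map_eq_self_of_injective H.subtype_injective K]
    infer_instance

theorem commutatorElement_mem_zpowers (a b : G) :
    ⁅a, b⁆ ∈ Subgroup.zpowers a ⊓ Subgroup.zpowers b :=
  Subgroup.commutator_le_inf _ _ <| Subgroup.commutator_mem_commutator
    (Subgroup.mem_zpowers a) (Subgroup.mem_zpowers b)

/-- Writing `b ^ s = a ^ (s * v)` with `s` the order of `b` modulo `⟨a⟩`, one may take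
`x = a ^ (-v)`. -/
theorem exists_mem_zpowers_mul_pow_orderOf_eq_one {a b : G}
    (hodd : Odd (orderOf (b : G ⧸ Subgroup.zpowers a)))
    (hdvd : orderOf (b : G ⧸ Subgroup.zpowers a) ∣ orderOf (a : G ⧸ Subgroup.zpowers b)) :
    ∃ x ∈ Subgroup.zpowers a, (x * b) ^ orderOf (b : G ⧸ Subgroup.zpowers a) = 1 := by
  have hbs : b ^ orderOf (b : G ⧸ Subgroup.zpowers a) ∈ Subgroup.zpowers a := by
    rw [← QuotientGroup.eq_one_iff, QuotientGroup.mk_pow, pow_orderOf_eq_one]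
  generalize orderOf (b : G ⧸ Subgroup.zpowers a) = s at *
  obtain ⟨w, hw⟩ := Subgroup.mem_zpowers_iff.1 hbs
  obtain ⟨v, rfl⟩ : (s : ℤ) ∣ w := by
    refine (Int.natCast_dvd_natCast.2 hdvd).trans (orderOf_dvd_iff_zpow_eq_one.2 ?_)
    rw [← QuotientGroup.mk_zpow, QuotientGroup.eq_one_iff, hw]
    exact pow_mem (Subgroup.mem_zpowers b) s
  refine ⟨a ^ (-v), Subgroup.zpow_mem_zpowers a _, ?_⟩
  have hcomm := commutatorElement_mem_zpowers b (a ^ (-v))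
  have hbsa : Commute (b ^ s) (a ^ (-v)) := hw ▸ Commute.zpow_zpow_self a _ _
  rw [mul_pow_of_odd_of_commute_pow (commute_of_mem_zpowers hcomm.2)
      (commute_of_mem_zpowers hcomm.1) hodd hbsa,
    ← hw, ← zpow_natCast, ← zpow_mul, ← zpow_add, neg_mul, mul_comm v, neg_add_cancel, zpow_zero]

theorem commute_of_orderOf_dvd {a b : G} (hodd : Odd (orderOf (b : G ⧸ Subgroup.zpowers a)))
    (hdvd : orderOf (b : G ⧸ Subgroup.zpowers a) ∣ orderOf (a : G ⧸ Subgroup.zpowers b)) :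
    Commute a b := by
  obtain ⟨x, hxa, hxb⟩ := exists_mem_zpowers_mul_pow_orderOf_eq_one hodd hdvd
  have hmk : ((x * b : G) : G ⧸ Subgroup.zpowers a) = b := by
    rw [QuotientGroup.mk_mul, (QuotientGroup.eq_one_iff x).2 hxa, one_mul]
  have hdisj : Disjoint (Subgroup.zpowers a) (Subgroup.zpowers (x * b)) :=
    disjoint_zpowers_of_pow_orderOf_eq_one (hmk ▸ hxb)
  have hcomm : Commute a (x * b) := Subgroup.commute_of_normal_of_disjoint _ _ inferInstance
    inferInstance hdisj a (x * b) (Subgroup.mem_zpowers a) (Subgroup.mem_zpowers _)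
  simpa using (commute_of_mem_zpowers hxa).symm.inv_right.mul_right hcomm

theorem commute_of_isPGroup {p : ℕ} [Fact p.Prime] (hp : Odd p) (hG : IsPGroup p G) (a b : G) :
    Commute a b := by
  obtain ⟨k, hk⟩ := (IsPGroup.iff_orderOf.1 (hG.to_quotient (Subgroup.zpowers a))) b
  obtain ⟨l, hl⟩ := (IsPGroup.iff_orderOf.1 (hG.to_quotient (Subgroup.zpowers b))) a
  rcases le_total k l with hkl | hlk
  · exact commute_of_orderOf_dvd (hk ▸ hp.pow) (hk ▸ hl ▸ pow_dvd_pow p hkl)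
  · exact (commute_of_orderOf_dvd (hl ▸ hp.pow) (hk ▸ hl ▸ pow_dvd_pow p hlk)).symm

theorem commute_of_odd_card [Finite G] (hodd : Odd (Nat.card G)) (a b : G) : Commute a b := by
  let e := Sylow.directProductOfNormal (G := G) fun P => normal P.1
  suffices h : ∀ f g, Commute f g by
    simpa using (h (e.symm a) (e.symm b)).map e
  intro f g
  refine Pi.commute_iff.2 fun p => Pi.commute_iff.2 fun P => ?_
  have hp := Nat.mem_primeFactors.1 p.2
  have : Fact (p : ℕ).Prime := ⟨hp.1⟩
  exact commute_of_isPGroup (hodd.of_dvd_nat hp.2.1) P.isPGroup' (f p P) (g p P)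

end IsDedekindGroup

section Counting

open scoped Nat

theorem card_injective_choice_le {Q R : Type*} [Finite Q] [Finite R] {S : Q → Type*}
    [∀ q, Finite (S q)] (label : ∀ q, S q → R) {k : ℕ}
    (hk : ∀ q r, Nat.card {s // label q s = r} ≤ k) :
    Nat.card {t : ∀ q, S q // Function.Injective fun q => label q (t q)} ≤
      (Nat.card R).descFactorial (Nat.card Q) * k ^ Nat.card Q := by
  have := Fintype.ofFinite Q
  have := Fintype.ofFinite R
  let labelled (t : {t : ∀ q, S q // Function.Injective fun q => label q (t q)}) :
      Σ σ : Q ↪ R, ∀ q, {s // label q s = σ q} :=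
    ⟨⟨fun q => label q (t.1 q), t.2⟩, fun q => ⟨t.1 q, rfl⟩⟩
  let forget (z : Σ σ : Q ↪ R, ∀ q, {s // label q s = σ q}) (q : Q) : S q := (z.2 q).1
  have hinj : Function.Injective labelled := fun t t' h => Subtype.ext (congrArg forget h)
  calc Nat.card {t : ∀ q, S q // Function.Injective fun q => label q (t q)}
      ≤ Nat.card (Σ σ : Q ↪ R, ∀ q, {s // label q s = σ q}) := Nat.card_le_card_of_injective _ hinj
    _ = ∑ σ : Q ↪ R, ∏ q, Nat.card {s // label q s = σ q} := by
      simp only [Nat.card_sigma, Nat.card_pi]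
    _ ≤ ∑ _σ : Q ↪ R, ∏ _q : Q, k := by gcongr with σ _ q; exact hk q (σ q)
    _ = (Nat.card R).descFactorial (Nat.card Q) * k ^ Nat.card Q := by
      simp only [Finset.prod_const, Finset.sum_const, Finset.card_univ, Fintype.card_embedding_eq,
        smul_eq_mul, Nat.card_eq_fintype_card]

/-- The probability that a uniformly random self-map of an `m`-element set is bijective. -/
def bijectionProb (m : ℕ) : ℚ := m ! / (m : ℚ) ^ m

theorem bijectionProb_nonneg (m : ℕ) : 0 ≤ bijectionProb m := by
  unfold bijectionProb
  positivity

theorem antitone_bijectionProb : Antitone bijectionProb := by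
  refine antitone_nat_of_succ_le fun m => ?_
  rcases m.eq_zero_or_pos with rfl | hm
  · simp [bijectionProb]
  calc ((m + 1)! : ℚ) / ((m + 1 : ℕ) : ℚ) ^ (m + 1) = m ! / (m + 1 : ℚ) ^ m := by
        rw [Nat.factorial_succ, pow_succ']; push_cast; field_simp
    _ ≤ m ! / (m : ℚ) ^ m := by gcongr; linarith

theorem bijectionProb_le_one (m : ℕ) : bijectionProb m ≤ 1 :=
  (antitone_bijectionProb m.zero_le).trans_eq (by simp [bijectionProb])

end Counting

section Cosets

open MulAction
open scoped Nat

variable {G : Type*} [Group G] {H K : Subgroup G}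

/-- The intersection of a left coset `q` of `H` with a right coset of `K`. The right coset `Kx` is
encoded as the left coset `r = x⁻¹K`, so that double cosets `KxH` become `K`-orbits on `G ⧸ H` as
well as `H`-orbits on `G ⧸ K`. -/
def cosetInter (q : G ⧸ H) (r : G ⧸ K) : Set G :=
  {x | (x : G ⧸ H) = q ∧ ((x⁻¹ : G) : G ⧸ K) = r}

theorem card_cosetInter_comm (q : G ⧸ H) (r : G ⧸ K) :
    Nat.card (cosetInter q r) = Nat.card (cosetInter r q) :=
  Nat.card_congr <| (Equiv.inv G).subtypeEquiv fun x => by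
    simp [cosetInter, and_comm]

theorem card_cosetInter_mk (g : G) :
    Nat.card (cosetInter (g : G ⧸ H) ((g⁻¹ : G) : G ⧸ K)) =
      Nat.card (stabilizer H ((g⁻¹ : G) : G ⧸ K)) := by
  have himage : cosetInter (g : G ⧸ H) ((g⁻¹ : G) : G ⧸ K) =
      (fun h : H => g * h) '' (stabilizer H ((g⁻¹ : G) : G ⧸ K) : Set H) := by
    ext x
    constructor
    · rintro ⟨hx, hx'⟩
      refine ⟨⟨g⁻¹ * x, QuotientGroup.eq.1 hx.symm⟩, ?_, mul_inv_cancel_left g x⟩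
      rw [SetLike.mem_coe, mem_stabilizer_iff, ← eq_inv_smul_iff]
      change _ = (((g⁻¹ * x)⁻¹ * g⁻¹ : G) : G ⧸ K)
      rw [← hx', mul_inv_rev, inv_inv, mul_inv_cancel_right]
    · rintro ⟨h, hh, rfl⟩
      refine ⟨by simp, ?_⟩
      rw [SetLike.mem_coe, mem_stabilizer_iff, ← eq_inv_smul_iff] at hh
      rw [mul_inv_rev]
      exact hh.symm
  rw [himage, Nat.card_image_of_injective fun h h' e => Subtype.ext (mul_left_cancel e)]
  rfl

theorem card_orbit_mul_card_cosetInter {q : G ⧸ H} {r : G ⧸ K} (h : (cosetInter q r).Nonempty) :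
    Nat.card (orbit H r) * Nat.card (cosetInter q r) = Nat.card H := by
  obtain ⟨g, rfl, rfl⟩ := h
  rw [card_cosetInter_mk, ← Nat.card_prod, Nat.card_congr (orbitProdStabilizerEquivGroup H _)]

theorem card_cosetInter_le [Finite G] (q : G ⧸ H) (r : G ⧸ K) :
    Nat.card (cosetInter q r) ≤ Nat.card H / Nat.card (orbit H r) := by
  have : Nonempty (orbit H r) := ⟨⟨r, mem_orbit_self r⟩⟩
  rw [Nat.le_div_iff_mul_le Nat.card_pos, mul_comm]
  rcases (cosetInter q r).eq_empty_or_nonempty with h | h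
  · simp [h]
  · exact (card_orbit_mul_card_cosetInter h).le

theorem card_orbit_mk_inv [Finite G] (hHK : Nat.card H = Nat.card K) (g : G) :
    Nat.card (orbit H ((g⁻¹ : G) : G ⧸ K)) = Nat.card (orbit K (g : G ⧸ H)) := by
  have hg : g ∈ cosetInter (g : G ⧸ H) ((g⁻¹ : G) : G ⧸ K) := ⟨rfl, rfl⟩
  have hg' : g⁻¹ ∈ cosetInter ((g⁻¹ : G) : G ⧸ K) (g : G ⧸ H) := ⟨rfl, by rw [inv_inv]⟩
  have : Nonempty (cosetInter (g : G ⧸ H) ((g⁻¹ : G) : G ⧸ K)) := ⟨⟨g, hg⟩⟩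
  have hpos : 0 < Nat.card (cosetInter (g : G ⧸ H) ((g⁻¹ : G) : G ⧸ K)) := Nat.card_pos
  refine Nat.eq_of_mul_eq_mul_right hpos ?_
  rw [card_orbit_mul_card_cosetInter ⟨g, hg⟩, card_cosetInter_comm,
    card_orbit_mul_card_cosetInter ⟨_, hg'⟩, hHK]

theorem mk_inv_mem_orbit {g x : G} (h : (x : G ⧸ H) ∈ orbit K (g : G ⧸ H)) :
    ((x⁻¹ : G) : G ⧸ K) ∈ orbit H ((g⁻¹ : G) : G ⧸ K) := by
  obtain ⟨k, hk : ((k * g : G) : G ⧸ H) = x⟩ := h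
  refine ⟨⟨_, inv_mem (QuotientGroup.eq.1 hk)⟩, ?_⟩
  change ((((k * g : G)⁻¹ * x)⁻¹ * g⁻¹ : G) : G ⧸ K) = _
  simp [mul_assoc]

/-- A choice of one element from each left coset of `H` lying in `A` such that the chosen elements
lie in distinct right cosets of `K`, with right cosets encoded as in `cosetInter`. -/
def PartialTransversal (H K : Subgroup G) (A : Set (G ⧸ H)) : Type _ :=
  {t : ∀ q : A, {x : G // (x : G ⧸ H) = q} //
    Function.Injective fun q => (((t q).1⁻¹ : G) : G ⧸ K)}

theorem card_partialTransversal_orbit_le [Finite G] (hHK : Nat.card H = Nat.card K) (g : G) :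
    Nat.card (PartialTransversal H K (orbit K (g : G ⧸ H))) ≤
      (Nat.card (orbit K (g : G ⧸ H)))! *
        (Nat.card H / Nat.card (orbit K (g : G ⧸ H))) ^ Nat.card (orbit K (g : G ⧸ H)) := by
  let label (q : orbit K (g : G ⧸ H)) (x : {x : G // (x : G ⧸ H) = q}) :
      orbit H ((g⁻¹ : G) : G ⧸ K) :=
    ⟨((x.1⁻¹ : G) : G ⧸ K), mk_inv_mem_orbit (x.2.symm ▸ q.2)⟩
  have hfiber q r : Nat.card {x // label q x = r} ≤
      Nat.card H / Nat.card (orbit K (g : G ⧸ H)) := by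
    calc Nat.card {x // label q x = r} ≤ Nat.card (cosetInter q.1 r.1) :=
          Nat.card_le_card_of_injective (fun x => ⟨x.1.1, x.1.2, congrArg Subtype.val x.2⟩)
            fun x y h => Subtype.ext (Subtype.ext (Subtype.mk.inj h))
      _ ≤ Nat.card H / Nat.card (orbit H r.1) := card_cosetInter_le q.1 r.1
      _ = Nat.card H / Nat.card (orbit K (g : G ⧸ H)) := by
          rw [orbit_eq_iff.2 r.2, card_orbit_mk_inv hHK]
  have hcount := card_injective_choice_le label hfiber
  rw [card_orbit_mk_inv hHK g, Nat.descFactorial_self] at hcount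
  refine le_trans ?_ hcount
  exact Nat.card_le_card_of_injective
    (fun t => ⟨t.1, fun q q' h => t.2 (congrArg Subtype.val h)⟩)
    fun t t' h => Subtype.ext (Subtype.mk.inj h)

namespace IsDoubleTransversal

variable {T : Set G}

theorem isComplement (hT : IsDoubleTransversal H K T) : Subgroup.IsComplement T (H : Set G) := by
  rw [Subgroup.isComplement_iff_existsUnique_inv_mul_mem]
  intro g
  obtain ⟨t, ⟨htT, htH⟩, huniq⟩ := hT.1 g
  refine ⟨⟨t, htT⟩, by simpa using inv_mem htH, fun s hs => Subtype.ext (huniq s ⟨s.2, ?_⟩)⟩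
  simpa using inv_mem hs

theorem injOn_mk_inv (hT : IsDoubleTransversal H K T) :
    Set.InjOn (fun x : G => ((x⁻¹ : G) : G ⧸ K)) T := by
  intro x hx y hy hxy
  have hyx : x * y⁻¹ ∈ K := by simpa using QuotientGroup.eq.1 hxy
  exact (hT.2 y).unique ⟨hx, hyx⟩ ⟨hy, by simp⟩

theorem range_leftQuotientEquiv (hT : IsDoubleTransversal H K T) :
    Set.range (fun q => (hT.isComplement.leftQuotientEquiv q : G)) = T :=
  (hT.isComplement.leftQuotientEquiv.surjective.range_comp Subtype.val).trans Subtype.range_coe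

/-- The elements of `T` in the left cosets belonging to `A`. -/
noncomputable def restrict (hT : IsDoubleTransversal H K T) (A : Set (G ⧸ H)) :
    PartialTransversal H K A :=
  ⟨fun q => ⟨hT.isComplement.leftQuotientEquiv q,
      hT.isComplement.quotientGroupMk_leftQuotientEquiv q⟩,
    fun _ _ h => Subtype.ext <| hT.isComplement.leftQuotientEquiv.injective <| Subtype.ext <|
      hT.injOn_mk_inv (Subtype.coe_prop _) (Subtype.coe_prop _) h⟩

end IsDoubleTransversal

theorem numDT_le_prod [Finite G] [Fintype (orbitRel.Quotient K (G ⧸ H))] : numDT H K ≤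
    ∏ ω : orbitRel.Quotient K (G ⧸ H), Nat.card (PartialTransversal H K ω.orbit) := by
  rw [← Nat.card_pi]
  have (ω : orbitRel.Quotient K (G ⧸ H)) : Finite (PartialTransversal H K ω.orbit) :=
    inferInstanceAs (Finite (Subtype _))
  refine Nat.card_le_card_of_injective (fun T ω => T.2.restrict ω.orbit) fun T T' h => ?_
  have hchoice (q : G ⧸ H) : (T.2.isComplement.leftQuotientEquiv q : G) =
      T'.2.isComplement.leftQuotientEquiv q :=
    congrArg (fun t => (t.1 ⟨q, orbitRel.Quotient.mem_orbit.2 rfl⟩).1)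
      (congrFun h (Quotient.mk'' q))
  apply Subtype.ext
  rw [← T.2.range_leftQuotientEquiv, ← T'.2.range_leftQuotientEquiv]
  exact congrArg Set.range (funext hchoice)

theorem card_partialTransversal_div_le [Finite G] (hHK : Nat.card H = Nat.card K)
    (ω : orbitRel.Quotient K (G ⧸ H)) :
    (Nat.card (PartialTransversal H K ω.orbit) : ℚ) / (Nat.card H : ℚ) ^ Nat.card ω.orbit ≤
      bijectionProb (Nat.card ω.orbit) := by
  have hcard : Nat.card (PartialTransversal H K ω.orbit) ≤
      (Nat.card ω.orbit)! * (Nat.card H / Nat.card ω.orbit) ^ Nat.card ω.orbit := by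
    obtain ⟨q, rfl⟩ := Quotient.exists_rep ω
    obtain ⟨g, rfl⟩ := QuotientGroup.mk_surjective q
    exact card_partialTransversal_orbit_le hHK g
  have hH : (Nat.card H : ℚ) ≠ 0 := Nat.cast_ne_zero.2 Nat.card_pos.ne'
  generalize Nat.card ω.orbit = m at *
  calc (Nat.card (PartialTransversal H K ω.orbit) : ℚ) / (Nat.card H : ℚ) ^ m
      ≤ (m ! * (Nat.card H / m : ℕ) ^ m : ℚ) / (Nat.card H : ℚ) ^ m := by
        gcongr
        exact_mod_cast hcard
    _ ≤ (m ! * (Nat.card H / m : ℚ) ^ m) / (Nat.card H : ℚ) ^ m := by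
        gcongr
        exact Nat.cast_div_le
    _ = bijectionProb m := by
        rw [bijectionProb, div_pow]
        field_simp

theorem transProb_le_prod [Finite G] [Fintype (orbitRel.Quotient K (G ⧸ H))]
    (hHK : Nat.card H = Nat.card K) :
    transProb H K ≤ ∏ ω : orbitRel.Quotient K (G ⧸ H), bijectionProb (Nat.card ω.orbit) := by
  have hindex : H.index = ∑ ω : orbitRel.Quotient K (G ⧸ H), Nat.card ω.orbit := by
    rw [Subgroup.index, Nat.card_congr (selfEquivSigmaOrbits' K (G ⧸ H)), Nat.card_sigma]
  calc transProb H K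
      ≤ (∏ ω : orbitRel.Quotient K (G ⧸ H), Nat.card (PartialTransversal H K ω.orbit) : ℚ) /
          (Nat.card H : ℚ) ^ H.index := by
        rw [transProb]
        gcongr
        exact_mod_cast numDT_le_prod
    _ = ∏ ω : orbitRel.Quotient K (G ⧸ H),
          (Nat.card (PartialTransversal H K ω.orbit) : ℚ) /
            (Nat.card H : ℚ) ^ Nat.card ω.orbit := by
        rw [hindex, ← Finset.prod_pow_eq_pow_sum, Finset.prod_div_distrib]
    _ ≤ _ := Finset.prod_le_prod (fun _ _ => by positivity)
        fun ω _ => card_partialTransversal_div_le hHK ω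

theorem transProb_le_mul [Finite G] (hHK : Nat.card H = Nat.card K) {q r : G ⧸ H}
    (hqr : q ∉ orbit K r) : transProb H K ≤
      bijectionProb (Nat.card (orbit K q)) * bijectionProb (Nat.card (orbit K r)) := by
  have := Fintype.ofFinite (orbitRel.Quotient K (G ⧸ H))
  have hne : (Quotient.mk'' q : orbitRel.Quotient K (G ⧸ H)) ≠ Quotient.mk'' r :=
    fun h => hqr (Quotient.exact' h)
  calc transProb H K
      ≤ ∏ ω : orbitRel.Quotient K (G ⧸ H), bijectionProb (Nat.card ω.orbit) :=
        transProb_le_prod hHK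
    _ ≤ ∏ ω ∈ ({Quotient.mk'' q, Quotient.mk'' r} : Finset (orbitRel.Quotient K (G ⧸ H))),
          bijectionProb (Nat.card ω.orbit) :=
        Finset.prod_le_prod_of_subset_of_le_one (Finset.subset_univ _)
          (fun _ _ => bijectionProb_nonneg _) fun _ _ _ => bijectionProb_le_one _
    _ = bijectionProb (Nat.card (orbit K q)) * bijectionProb (Nat.card (orbit K r)) :=
        Finset.prod_pair hne

end Cosets

section OddOrder

open MulAction

variable {G : Type*} [Group G]

theorem mem_of_sq_mem_of_odd_card (hodd : Odd (Nat.card G)) {H : Subgroup G} {x : G}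
    (h : x ^ 2 ∈ H) : x ∈ H := by
  have hx : x ∈ Subgroup.zpowers (x ^ 2) := by
    rw [mem_zpowers_pow_iff, ← Nat.coprime_iff_gcd_eq_one, Nat.coprime_two_left]
    exact hodd.of_dvd_nat (orderOf_dvd_natCard x)
  exact Subgroup.zpowers_le.2 h hx

theorem mk_notMem_orbit_mk_inv (hodd : Odd (Nat.card G)) {H : Subgroup G} {g : G} (hg : g ∉ H) :
    (g : G ⧸ H) ∉ orbit H ((g⁻¹ : G) : G ⧸ H) := by
  rintro ⟨h, hh : ((h * g⁻¹ : G) : G ⧸ H) = g⟩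
  have hsq : (g * (h : G)⁻¹) ^ 2 ∈ H := by
    have hmem : (h * g⁻¹ : G)⁻¹ * g ∈ H := QuotientGroup.eq.1 hh
    have heq : (g * (h : G)⁻¹) ^ 2 = (h * g⁻¹ : G)⁻¹ * g * (h : G)⁻¹ := by rw [sq]; group
    exact heq ▸ mul_mem hmem (inv_mem h.2)
  exact hg ((Subgroup.mul_mem_cancel_right H (inv_mem h.2)).1 (mem_of_sq_mem_of_odd_card hodd hsq))

theorem three_le_card_orbit (hodd : Odd (Nat.card G)) {X : Type*} [MulAction G X]
    {x : X} (hx : x ∉ fixedPoints G X) : 3 ≤ Nat.card (orbit G x) := by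
  have hmul : Nat.card (orbit G x) * Nat.card (stabilizer G x) = Nat.card G := by
    rw [← Nat.card_prod, Nat.card_congr (orbitProdStabilizerEquivGroup G x)]
  have hodd' : Odd (Nat.card (orbit G x)) := hodd.of_dvd_nat (Dvd.intro _ hmul)
  have hne : Nat.card (orbit G x) ≠ 1 := fun h =>
    hx <| subsingleton_orbit_iff_mem_fixedPoints.1 <| (Set.subsingleton_coe _).1
      (Nat.card_eq_one_iff_unique.1 h).1
  obtain ⟨k, hk⟩ := hodd'
  lia

theorem transProb_le_of_not_normal [Finite G] (hodd : Odd (Nat.card G)) {H : Subgroup G}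
    (hH : ¬ H.Normal) : transProb H H ≤ 4 / 81 := by
  obtain ⟨g, hg⟩ : ∃ g, g ∉ Subgroup.normalizer (H : Set G) := by
    by_contra! h
    exact hH (Subgroup.normalizer_eq_top_iff.1 ((Subgroup.eq_top_iff' _).2 h))
  have hcard : 3 ≤ Nat.card (orbit H (g : G ⧸ H)) :=
    three_le_card_orbit (hodd.of_dvd_nat H.card_subgroup_dvd_card)
      (mt Sylow.mem_fixedPoints_mul_left_cosets_iff_mem_normalizer.1 hg)
  calc transProb H H
      ≤ bijectionProb (Nat.card (orbit H (g : G ⧸ H))) *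
          bijectionProb (Nat.card (orbit H ((g⁻¹ : G) : G ⧸ H))) :=
        transProb_le_mul rfl (mk_notMem_orbit_mk_inv hodd fun h => hg (Subgroup.le_normalizer h))
    _ = bijectionProb (Nat.card (orbit H (g : G ⧸ H))) ^ 2 := by rw [card_orbit_mk_inv rfl, sq]
    _ ≤ bijectionProb 3 ^ 2 :=
        pow_le_pow_left₀ (bijectionProb_nonneg _) (antitone_bijectionProb hcard) 2
    _ = 4 / 81 := by norm_num [bijectionProb, Nat.factorial]

end OddOrder

theorem tp_le_transProb {G : Type*} [Group G] [Finite G] (H : Subgroup G) :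
    tp G ≤ transProb H H := by
  unfold tp
  exact Finset.inf'_le _ (@Finset.mem_univ _ (_) H)

theorem stmt18 (G : Type*) [Group G] [Finite G] (hodd : Odd (Nat.card G))
    (hna : ¬ ∀ a b : G, a * b = b * a) :
    tp G ≤ (4 / 81 : ℚ) := by
  obtain ⟨H, hH⟩ : ∃ H : Subgroup G, ¬ H.Normal := by
    by_contra! hnormal
    have : IsDedekindGroup G := ⟨hnormal⟩
    exact hna (IsDedekindGroup.commute_of_odd_card hodd)
  exact (tp_le_transProb H).trans (transProb_le_of_not_normal hodd hH)
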